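/- Let Y ∈ ℝ⟦X⟧ be the unique formal power series with zero constant term satisfying Y = X·exp(Y) (the tree function, with n-th coefficient n^{n−1}/n!). For t ∈ ℝ, let F_t ∈ ℝ⟦X⟧ be the formal power series whose n-th coefficient, for n ≥ 1, is ∑ |Aut(T)|^{−t} summed over the isomorphism classes of rooted labeled trees on n vertices, and let c(j,t) be as in the Pólya functional equation. Define Ξ = X · exp(∑_{j≥2} (c(j,2)/j) · F_{2j}(X^j)) ∈ ℝ⟦X⟧, a power series with zero constant term. Then F_2 = Y ∘ Ξ, the substitution of Ξ into Y. -/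

import Mathlib

open scoped Classical BigOperators

/-- A rooted labeled tree on `n` vertices: a simple graph on `Fin n` that is a
tree, together with a distinguished root vertex. -/
structure RTree (n : ℕ) where
  graph : SimpleGraph (Fin n)
  isTree : graph.IsTree
  root : Fin n

namespace RTree

/-- Two rooted labeled trees are isomorphic if there is a graph isomorphism
mapping root to root. -/
def Isom {n : ℕ} (T₁ T₂ : RTree n) : Prop :=
  ∃ φ : T₁.graph ≃g T₂.graph, φ T₁.root = T₂.root

/-- The out-degree (number of children) of a vertex: its degree if it is the
root and its degree minus one otherwise. -/
noncomputable def outdeg {n : ℕ} (T : RTree n) (v : Fin n) : ℕ :=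
  if v = T.root then (T.graph.neighborSet v).ncard
  else (T.graph.neighborSet v).ncard - 1

/-- The number of root-fixing graph automorphisms. -/
noncomputable def autCard {n : ℕ} (T : RTree n) : ℕ :=
  Nat.card {φ : T.graph ≃g T.graph // φ T.root = T.root}

instance finite {n : ℕ} : Finite (RTree n) := by
  have h : Function.Injective (fun T : RTree n => (T.graph, T.root)) := by
    rintro ⟨g₁, h₁, r₁⟩ ⟨g₂, h₂, r₂⟩ h
    simp_all
  exact Finite.of_injective _ h

noncomputable instance fintype {n : ℕ} : Fintype (RTree n) := Fintype.ofFinite _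

end RTree

/-- The isomorphism classes of rooted labeled trees on `n` vertices (Pólya
trees of size `n`). -/
def Polya (n : ℕ) : Type :=
  Quot (fun T₁ T₂ : RTree n => T₁.Isom T₂)

instance (n : ℕ) : Finite (Polya n) :=
  Finite.of_surjective (Quot.mk _) Quot.exists_rep

noncomputable instance (n : ℕ) : Fintype (Polya n) := Fintype.ofFinite _

/-- The coefficient `c(j,t)` of the Pólya-tree functional equation:
`c(j,t) = j · ∑_{λ ⊢ j} ((−1)^{ℓ(λ)−1}/ℓ(λ)) · (ℓ(λ)!/∏_m λ_m!) · ∏_m (m!)^{−λ_m t}`. -/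
noncomputable def polyaC (j : ℕ) (t : ℝ) : ℝ :=
  j * ∑ P : Nat.Partition j,
    ((-1 : ℝ) ^ (Multiset.card P.parts - 1) / (Multiset.card P.parts : ℝ)) *
      (((Multiset.card P.parts).factorial : ℝ) /
        ∏ m ∈ Finset.range (j + 1), ((P.parts.count m).factorial : ℝ)) *
      ∏ m ∈ Finset.range (j + 1),
        ((m.factorial : ℝ)) ^ (-(P.parts.count m : ℝ) * t)

/-- The exponential `exp(G) = ∑_{k ≥ 0} G^k/k!` of a formal power series;
for `G` with zero constant term only the terms with `k ≤ n` contribute to the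
`n`-th coefficient, so the defining truncated sum is exact. -/
noncomputable def pexp (G : PowerSeries ℝ) : PowerSeries ℝ :=
  PowerSeries.mk fun n =>
    ∑ k ∈ Finset.range (n + 1), PowerSeries.coeff n (G ^ k) / (k.factorial : ℝ)

/-- The series `∑_{j ≥ 1} (c(j,t)/j) · F_{jt}(X^j)`, where `F_{jt}(X^j)` is
the substitution of `X^j` into `F (j·t)`: its `n`-th coefficient is the
`(n/j)`-th coefficient of `F (j·t)` when `j ∣ n` and `0` otherwise.  The sum is
coefficientwise finite since `F_{jt}(X^j)` has order at least `j` (each `F s`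
has zero constant coefficient), so only `1 ≤ j ≤ n` contribute. -/
noncomputable def polyaSum (F : ℝ → PowerSeries ℝ) (t : ℝ) : PowerSeries ℝ :=
  PowerSeries.mk fun n =>
    ∑ j ∈ Finset.Icc 1 n,
      (polyaC j t / (j : ℝ)) *
        (if j ∣ n then PowerSeries.coeff (n / j) (F ((j : ℝ) * t)) else 0)

/-- Composition `Y ∘ G` of formal power series, for `G` with zero constant
term: the `n`-th coefficient is `∑_{k ≤ n} (coeff k Y) · coeff n (G^k)`, which
is the standard substitution of `G` into `Y` since `G^k` has order at least
`k`. -/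
noncomputable def pcomp (Y G : PowerSeries ℝ) : PowerSeries ℝ :=
  PowerSeries.mk fun n =>
    ∑ k ∈ Finset.range (n + 1), PowerSeries.coeff k Y * PowerSeries.coeff n (G ^ k)

/-- The series `Ξ = X · exp(∑_{j ≥ 2} (c(j,2)/j) · F_{2j}(X^j))`. -/
noncomputable def xiSeries (F : ℝ → PowerSeries ℝ) : PowerSeries ℝ :=
  PowerSeries.X * pexp (PowerSeries.mk fun n =>
    ∑ j ∈ Finset.Icc 2 n,
      (polyaC j 2 / (j : ℝ)) *
        (if j ∣ n then PowerSeries.coeff (n / j) (F ((j : ℝ) * 2)) else 0))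

/-!
A rooted tree is determined by the multiset of its branches at the root. If the isomorphism class
`S` occurs `m_S` times among them, an automorphism permutes the isomorphic branches and acts on each
of them, so `|Aut T| = ∏_S m_S! · |Aut S| ^ m_S`. Summing `|Aut T| ^ (-t)` over all families of
multiplicities gives

  `F_t = X · ∏_S φ_t(|Aut S| ^ (-t) · X ^ |S|)`, where `φ_t = ∑_m X ^ m / (m!) ^ t`.

The `j`-th coefficient of `log φ_t` is `c(j,t) / j`, by expanding the powers of `φ_t - 1` over
partitions, so taking logarithms turns the product into Pólya's functional equation
`F_t = X · exp(∑_{j ≥ 1} (c(j,t) / j) · F_{jt}(X ^ j))`. Because `c(1,t) = 1`, splitting off `j = 1`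
yields `F_t = Ξ · exp F_t`. The equation `Z = Ξ · exp Z` has only one solution, and substituting `Ξ`
into `Y = X · exp Y` shows that `Y ∘ Ξ` is one.
-/

section Substitution

open PowerSeries

variable {R : Type*} [CommRing R] {f g h : R⟦X⟧}

lemma coeff_pow_eq_zero_of_lt (hg : constantCoeff g = 0) {n k : ℕ} (hnk : n < k) :
    coeff n (g ^ k) = 0 :=
  X_pow_dvd_iff.mp (pow_dvd_pow_of_dvd (X_dvd_iff.mpr hg) k) n hnk

lemma eq_zero_of_forall_X_pow_dvd (hf : ∀ n : ℕ, X ^ n ∣ f) : f = 0 :=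
  ext fun n => X_pow_dvd_iff.mp (hf (n + 1)) n n.lt_succ_self

lemma coeff_subst_eq_sum_range (hg : constantCoeff g = 0) (f : R⟦X⟧) (n : ℕ) :
    coeff n (f.subst g) = ∑ k ∈ Finset.range (n + 1), coeff k f * coeff n (g ^ k) := by
  rw [coeff_subst' (HasSubst.of_constantCoeff_zero' hg)]
  refine finsum_eq_sum_of_support_subset _ fun k hk => ?_
  by_contra hkn
  refine hk (?_ : coeff k f • coeff n (g ^ k) = 0)
  rw [coeff_pow_eq_zero_of_lt hg (by simpa using hkn), smul_zero]

lemma constantCoeff_subst_of_constantCoeff_zero (hg : constantCoeff g = 0) (f : R⟦X⟧) :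
    constantCoeff (f.subst g) = constantCoeff f := by
  rw [← coeff_zero_eq_constantCoeff_apply, coeff_subst_eq_sum_range hg]
  simp

lemma one_subst (hg : constantCoeff g = 0) : (1 : R⟦X⟧).subst g = (1 : R⟦X⟧) := by
  rw [← coe_substAlgHom (HasSubst.of_constantCoeff_zero' hg), map_one]

lemma X_pow_dvd_subst_sub_subst (hg : constantCoeff g = 0) (hh : constantCoeff h = 0) {n : ℕ}
    (hgh : X ^ n ∣ g - h) (f : R⟦X⟧) : X ^ n ∣ f.subst g - f.subst h := by
  rw [X_pow_dvd_iff]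
  intro m hm
  rw [map_sub, coeff_subst_eq_sum_range hg, coeff_subst_eq_sum_range hh, ← Finset.sum_sub_distrib]
  refine Finset.sum_eq_zero fun k _ => ?_
  rw [← mul_sub, ← map_sub, X_pow_dvd_iff.mp (hgh.trans (sub_dvd_pow_sub_pow g h k)) m hm, mul_zero]

/-- Each application of the fixed-point equation gains one order of `X`-adic agreement. -/
lemma eq_of_eq_mul_subst {Ξ Z Z' : R⟦X⟧} (hΞ : constantCoeff Ξ = 0)
    (hZ : Z = Ξ * f.subst Z) (hZ' : Z' = Ξ * f.subst Z') : Z = Z' := by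
  have hZ₀ : constantCoeff Z = 0 := by rw [hZ, map_mul, hΞ, zero_mul]
  have hZ'₀ : constantCoeff Z' = 0 := by rw [hZ', map_mul, hΞ, zero_mul]
  refine sub_eq_zero.mp (eq_zero_of_forall_X_pow_dvd fun n => ?_)
  induction n with
  | zero => exact (pow_zero (X : R⟦X⟧)).symm ▸ one_dvd _
  | succ n ih =>
    rw [hZ, hZ', ← mul_sub, pow_succ']
    exact mul_dvd_mul (X_dvd_iff.mpr hΞ) (X_pow_dvd_subst_sub_subst hZ₀ hZ'₀ ih f)

lemma eq_subst_of_eq_mul_subst {Ξ Y Z : R⟦X⟧} (hΞ : constantCoeff Ξ = 0)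
    (hY : Y = X * f.subst Y) (hZ : Z = Ξ * f.subst Z) : Z = Y.subst Ξ := by
  have hY₀ : constantCoeff Y = 0 := by rw [hY, map_mul, constantCoeff_X, zero_mul]
  have hsΞ := HasSubst.of_constantCoeff_zero' hΞ
  refine eq_of_eq_mul_subst hΞ hZ ?_
  calc Y.subst Ξ = (X * f.subst Y).subst Ξ := by rw [← hY]
    _ = Ξ * f.subst (Y.subst Ξ) := by
      rw [subst_mul hsΞ, subst_X hsΞ,
        subst_comp_subst_apply (HasSubst.of_constantCoeff_zero' hY₀) hsΞ]

end Substitution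

section ExpLog

open PowerSeries

variable {R : Type*} [CommRing R]

lemma eq_zero_of_derivative_eq_mul [IsAddTorsionFree R] {f L : R⟦X⟧}
    (hf : d⁄dX R f = L * f) (hf₀ : constantCoeff f = 0) : f = 0 := by
  refine eq_zero_of_forall_X_pow_dvd fun n => ?_
  induction n with
  | zero => exact (pow_zero (X : R⟦X⟧)).symm ▸ one_dvd f
  | succ n ih =>
    rw [X_pow_dvd_iff] at ih ⊢
    rintro (_ | m) hm
    · rwa [coeff_zero_eq_constantCoeff_apply]
    have hderiv : coeff m (d⁄dX R f) = 0 := by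
      rw [hf]
      exact X_pow_dvd_iff.mp ((X_pow_dvd_iff.mpr ih).mul_left L) m (by omega)
    rw [coeff_derivative, ← Nat.cast_add_one, mul_comm, ← nsmul_eq_mul] at hderiv
    exact (smul_eq_zero_iff_right m.succ_ne_zero).mp hderiv

lemma eq_of_derivative_eq_mul [IsAddTorsionFree R] {f g L : R⟦X⟧} (hf : d⁄dX R f = L * f)
    (hg : d⁄dX R g = L * g) (hfg : constantCoeff f = constantCoeff g) : f = g := by
  refine sub_eq_zero.mp (eq_zero_of_derivative_eq_mul (L := L) ?_ ?_)
  · rw [map_sub, hf, hg, mul_sub]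
  · rw [map_sub, hfg, sub_self]

variable [Algebra ℚ R]

lemma derivative_exp_subst {g : R⟦X⟧} (hg : constantCoeff g = 0) :
    d⁄dX R ((exp R).subst g) = d⁄dX R g * (exp R).subst g := by
  rw [derivative_subst (HasSubst.of_constantCoeff_zero' hg), derivative_exp, mul_comm]

lemma constantCoeff_exp_subst {g : R⟦X⟧} (hg : constantCoeff g = 0) :
    constantCoeff ((exp R).subst g) = 1 := by
  rw [constantCoeff_subst_of_constantCoeff_zero hg, constantCoeff_exp]

lemma exp_subst_add {g h : R⟦X⟧} (hg : constantCoeff g = 0) (hh : constantCoeff h = 0) :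
    (exp R).subst (g + h) = (exp R).subst g * (exp R).subst h := by
  have := IsAddTorsionFree.of_module_rat R
  have hgh : constantCoeff (g + h) = 0 := by rw [map_add, hg, hh, add_zero]
  refine eq_of_derivative_eq_mul (derivative_exp_subst hgh) ?_ ?_
  · rw [Derivation.leibniz, derivative_exp_subst hg, derivative_exp_subst hh, map_add]
    simp only [smul_eq_mul]
    ring
  · rw [map_mul, constantCoeff_exp_subst hgh, constantCoeff_exp_subst hg,
      constantCoeff_exp_subst hh, mul_one]

lemma exp_subst_zero : (exp R).subst (0 : R⟦X⟧) = 1 := by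
  ext n
  rw [coeff_subst_eq_sum_range (map_zero _), Finset.sum_range_succ', pow_zero]
  simp

lemma exp_subst_sum {ι : Type*} (s : Finset ι) {g : ι → R⟦X⟧}
    (hg : ∀ i ∈ s, constantCoeff (g i) = 0) :
    (exp R).subst (∑ i ∈ s, g i) = ∏ i ∈ s, (exp R).subst (g i) := by
  induction s using Finset.cons_induction with
  | empty => simpa using exp_subst_zero
  | cons a s ha ih =>
    rw [Finset.forall_mem_cons] at hg
    rw [Finset.sum_cons, Finset.prod_cons, exp_subst_add hg.1, ih hg.2]
    rw [map_sum]
    exact Finset.sum_eq_zero hg.2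

lemma derivative_log_mul_one_add_X : d⁄dX R (log R) * (1 + X) = 1 := by
  rw [deriv_log]
  ext (_ | n)
  · simp
  · rw [mul_add, map_add, mul_one, coeff_succ_mul_X]
    simp [coeff_one, pow_succ]

/-- Both sides solve `y' = (f' / f) y`. -/
lemma exp_subst_logOf {f : R⟦X⟧} (hf : constantCoeff f = 1) : (exp R).subst (logOf f) = f := by
  have := IsAddTorsionFree.of_module_rat R
  have hf₀ : constantCoeff (f - 1) = 0 := by rw [map_sub, hf, map_one, sub_self]
  have hs := HasSubst.of_constantCoeff_zero' hf₀
  have hlog : (d⁄dX R (log R)).subst (f - 1) * f = 1 := by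
    have := congrArg (subst (f - 1)) (derivative_log_mul_one_add_X (R := R))
    rwa [subst_mul hs, subst_add hs, subst_X hs, one_subst hf₀, add_sub_cancel] at this
  refine eq_of_derivative_eq_mul (derivative_exp_subst (constantCoeff_logOf hf)) ?_ ?_
  · rw [logOf_eq, derivative_subst hs, map_sub, derivative_one, sub_zero]
    linear_combination -(d⁄dX R f) * hlog
  · rw [constantCoeff_exp_subst (constantCoeff_logOf hf), hf]

lemma constantCoeff_logOf_subst {f g : R⟦X⟧} (hf : constantCoeff f = 1)
    (hg : constantCoeff g = 0) : constantCoeff ((logOf f).subst g) = 0 := by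
  rw [constantCoeff_subst_of_constantCoeff_zero hg, constantCoeff_logOf hf]

lemma exp_subst_logOf_subst {f g : R⟦X⟧} (hf : constantCoeff f = 1)
    (hg : constantCoeff g = 0) : (exp R).subst ((logOf f).subst g) = f.subst g := by
  rw [← subst_comp_subst_apply (HasSubst.of_constantCoeff_zero' (constantCoeff_logOf hf))
    (HasSubst.of_constantCoeff_zero' hg), exp_subst_logOf hf]

end ExpLog

section MonomialSubstitution

open PowerSeries

variable {R : Type*} [CommRing R] {ι : Type*} [Fintype ι]

lemma constantCoeff_C_mul_X_pow (a : R) {w : ℕ} (hw : w ≠ 0) :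
    constantCoeff (C a * X ^ w : R⟦X⟧) = 0 := by
  rw [map_mul, map_pow, constantCoeff_X, zero_pow hw, mul_zero]

lemma coeff_subst_C_mul_X_pow (f : R⟦X⟧) (a : R) {w : ℕ} (hw : w ≠ 0) (n : ℕ) :
    coeff n (f.subst (C a * X ^ w)) = if w ∣ n then coeff (n / w) f * a ^ (n / w) else 0 := by
  have hX : HasSubst (X ^ w : R⟦X⟧) := HasSubst.X_pow hw
  have hrescale : f.subst (C a * X ^ w) = (rescale a f).subst (X ^ w : R⟦X⟧) := by
    rw [rescale_eq_subst, subst_comp_subst_apply (HasSubst.smul_X' a) hX, subst_smul hX, subst_X hX,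
      smul_eq_C_mul]
  rw [hrescale, coeff_subst_X_pow hw, coeff_rescale]
  simp only [Algebra.algebraMap_self_apply, mul_comm]

/-- The multiplicity functions `m : ι → ℕ` of total weight `∑ i, m i * w i = n`, for positive
weights `w`; the box `m i ≤ n` only serves to make the set finite. -/
noncomputable def weightedAntidiag (w : ι → ℕ) (n : ℕ) : Finset (ι → ℕ) :=
  {m ∈ Fintype.piFinset fun _ => Finset.range (n + 1) | ∑ i, m i * w i = n}

lemma mem_weightedAntidiag {w : ι → ℕ} (hw : ∀ i, w i ≠ 0) {n : ℕ} {m : ι → ℕ} :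
    m ∈ weightedAntidiag w n ↔ ∑ i, m i * w i = n := by
  rw [weightedAntidiag, Finset.mem_filter, and_iff_right_iff_imp]
  rintro rfl
  refine Fintype.mem_piFinset.mpr fun i => Finset.mem_range_succ_iff.mpr ?_
  calc m i ≤ m i * w i := Nat.le_mul_of_pos_right _ (Nat.pos_of_ne_zero (hw i))
    _ ≤ ∑ i, m i * w i :=
      Finset.single_le_sum_of_canonicallyOrdered (f := fun i => m i * w i) (Finset.mem_univ i)

lemma coeff_prod_subst_C_mul_X_pow (f : ι → R⟦X⟧) (a : ι → R) {w : ι → ℕ} (hw : ∀ i, w i ≠ 0)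
    (n : ℕ) :
    coeff n (∏ i, (f i).subst (C (a i) * X ^ w i)) =
      ∑ m ∈ weightedAntidiag w n, ∏ i, coeff (m i) (f i) * a i ^ m i := by
  rw [coeff_prod]
  symm
  refine Finset.sum_of_injOn (fun m => Finsupp.equivFunOnFinite.symm fun i => m i * w i)
    ?injective ?mapsTo ?vanish ?terms
  case injective =>
    intro m _ m' _ hmm'
    funext i
    exact Nat.eq_of_mul_eq_mul_right (Nat.pos_of_ne_zero (hw i)) (DFunLike.congr_fun hmm' i)
  case mapsTo =>
    intro m hm
    exact Finset.mem_finsuppAntidiag.mpr ⟨(mem_weightedAntidiag hw).mp hm, Finset.subset_univ _⟩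
  case vanish =>
    intro l hl hl'
    by_contra hprod
    have hdvd (i : ι) : w i ∣ l i := by
      by_contra hi
      refine hprod (Finset.prod_eq_zero (Finset.mem_univ i) ?_)
      rw [coeff_subst_C_mul_X_pow _ _ (hw i), if_neg hi]
    have hdiv (i : ι) : l i / w i * w i = l i := Nat.div_mul_cancel (hdvd i)
    refine hl' ⟨fun i => l i / w i, (mem_weightedAntidiag hw).mpr ?_, Finsupp.ext hdiv⟩
    simpa only [hdiv] using (Finset.mem_finsuppAntidiag.mp hl).1
  case terms =>
    intro m _
    refine Finset.prod_congr rfl fun i _ => ?_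
    rw [coeff_subst_C_mul_X_pow _ _ (hw i), Finsupp.equivFunOnFinite_symm_apply_apply,
      if_pos (Dvd.intro_left _ rfl), Nat.mul_div_cancel _ (Nat.pos_of_ne_zero (hw i))]

end MonomialSubstitution

section Partitions

open PowerSeries

variable {R : Type*} [CommRing R]

lemma prod_map_C_mul_X_pow (a : ℕ → R) (s : Multiset ℕ) :
    (s.map fun m => C (a m) * (X : R⟦X⟧) ^ m).prod = C (s.map a).prod * X ^ s.sum := by
  induction s using Multiset.induction_on with
  | empty => simp
  | cons m s ih =>
    simp only [Multiset.map_cons, Multiset.prod_cons, Multiset.sum_cons, ih, map_mul, pow_add]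
    ring

lemma X_pow_dvd_sub_sum_Icc {f : R⟦X⟧} (hf : constantCoeff f = 0) (n : ℕ) :
    X ^ (n + 1) ∣ f - ∑ m ∈ Finset.Icc 1 n, C (coeff m f) * X ^ m := by
  rw [X_pow_dvd_iff]
  intro m hm
  simp only [map_sub, map_sum, coeff_C_mul, coeff_X_pow, mul_ite, mul_one, mul_zero,
    Finset.sum_ite_eq, Finset.mem_Icc]
  rcases Nat.eq_zero_or_pos m with rfl | hm₀
  · simpa using hf
  · rw [if_pos ⟨hm₀, Nat.lt_succ_iff.mp hm⟩, sub_self]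

lemma coeff_pow_eq_sum_partition {f : R⟦X⟧} (hf : constantCoeff f = 0) (n k : ℕ) :
    coeff n (f ^ k) = ∑ P : n.Partition with P.parts.card = k,
      (P.parts.countPerms : R) * (P.parts.map fun m => coeff m f).prod := by
  have htrunc : coeff n (f ^ k) = coeff n ((∑ m ∈ Finset.Icc 1 n, C (coeff m f) * X ^ m) ^ k) := by
    rw [← sub_eq_zero, ← map_sub]
    exact X_pow_dvd_iff.mp ((X_pow_dvd_sub_sum_Icc hf n).trans (sub_dvd_pow_sub_pow _ _ k)) n
      n.lt_succ_self
  have hterm (s : Multiset ℕ) :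
      coeff n ((s.countPerms : R⟦X⟧) * (s.map fun m => C (coeff m f) * (X : R⟦X⟧) ^ m).prod) =
        if n = s.sum then s.countPerms * (s.map fun m => coeff m f).prod else 0 := by
    rw [prod_map_C_mul_X_pow, ← map_natCast (C (R := R)), coeff_C_mul, coeff_C_mul, coeff_X_pow,
      mul_ite, mul_one, mul_zero, mul_ite, mul_zero]
  rw [htrunc, Finset.sum_pow, map_sum, Finset.sum_congr rfl fun s _ => hterm s.val,
    ← Finset.sum_filter]
  symm
  refine Finset.sum_bij (fun P hP => ⟨P.parts, (Finset.mem_filter.mp hP).2⟩) ?_ ?_ ?_ fun _ _ => rfl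
  · intro P _
    refine Finset.mem_filter.mpr ⟨Finset.mem_sym_iff.mpr fun m hm => ?_, P.parts_sum.symm⟩
    exact Finset.mem_Icc.mpr ⟨P.parts_pos hm, P.parts_sum ▸ Multiset.le_sum_of_mem hm⟩
  · intro P _ Q _ hPQ
    exact Nat.Partition.ext (congrArg Subtype.val hPQ)
  · intro s hs
    obtain ⟨hmem, hsum⟩ := Finset.mem_filter.mp hs
    have hpos {m : ℕ} (hm : m ∈ s.val) : 0 < m :=
      (Finset.mem_Icc.mp (Finset.mem_sym_iff.mp hmem m hm)).1
    exact ⟨⟨s.val, hpos, hsum.symm⟩, Finset.mem_filter.mpr ⟨Finset.mem_univ _, s.2⟩, rfl⟩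

lemma card_parts_le {n : ℕ} (P : n.Partition) : P.parts.card ≤ n := by
  conv_rhs => rw [← P.parts_sum]
  simpa using Multiset.card_nsmul_le_sum (a := 1) fun _ hm => P.parts_pos hm

lemma coeff_logOf_eq_sum_partition [Algebra ℚ R] {f : R⟦X⟧} (hf : constantCoeff f = 1) (n : ℕ) :
    coeff n (logOf f) = ∑ P : n.Partition, coeff P.parts.card (log R) *
      (P.parts.countPerms * (P.parts.map fun m => coeff m f).prod) := by
  have hf₀ : constantCoeff (f - 1) = 0 := by rw [map_sub, hf, map_one, sub_self]
  have hcoeff (P : n.Partition) :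
      (P.parts.map fun m => coeff m (f - 1)) = P.parts.map fun m => coeff m f := by
    refine Multiset.map_congr rfl fun m hm => ?_
    rw [map_sub, coeff_one, if_neg (P.parts_pos hm).ne', sub_zero]
  rw [logOf_eq, coeff_subst_eq_sum_range hf₀, ← Finset.sum_fiberwise_of_maps_to
    (g := fun P : n.Partition => P.parts.card) (t := Finset.range (n + 1))
    fun P _ => Finset.mem_range_succ_iff.mpr (card_parts_le P)]
  refine Finset.sum_congr rfl fun k _ => ?_
  rw [coeff_pow_eq_sum_partition hf₀, Finset.mul_sum]
  refine Finset.sum_congr rfl fun P hP => ?_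
  rw [(Finset.mem_filter.mp hP).2, hcoeff]

lemma parts_toFinset_subset_range {n : ℕ} (P : n.Partition) :
    P.parts.toFinset ⊆ Finset.range (n + 1) := by
  intro m hm
  rw [Finset.mem_range_succ_iff, ← P.parts_sum]
  exact Multiset.le_sum_of_mem (Multiset.mem_toFinset.mp hm)

lemma prod_factorial_count_mul_countPerms {s : Multiset ℕ} {u : Finset ℕ} (hs : s.toFinset ⊆ u) :
    (∏ m ∈ u, (s.count m).factorial) * s.countPerms = s.card.factorial := by
  have hperms : s.countPerms = Nat.multinomial u fun m => s.count m := by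
    rw [Multiset.countPerms, Finsupp.multinomial_eq_of_support_subset (s := u)]
    · rfl
    · rwa [Multiset.toFinsupp_support]
  rw [hperms, Nat.multinomial_spec, Multiset.sum_count_eq_card]
  exact fun m hm => hs (Multiset.mem_toFinset.mpr hm)

/-- The series `∑ m, X ^ m / (m !) ^ t`, which counts multisets of copies of a single branch. -/
noncomputable def factorialRpowSeries (t : ℝ) : ℝ⟦X⟧ :=
  PowerSeries.mk fun m => (m.factorial : ℝ) ^ (-t)

lemma constantCoeff_factorialRpowSeries (t : ℝ) : constantCoeff (factorialRpowSeries t) = 1 := by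
  simp [factorialRpowSeries, ← coeff_zero_eq_constantCoeff_apply]

lemma coeff_log_real (k : ℕ) : coeff k (log ℝ) = (-1) ^ (k - 1) / (k : ℝ) := by
  rcases k with _ | k <;> simp [coeff_log, pow_succ]

lemma coeff_logOf_factorialRpowSeries {j : ℕ} (hj : j ≠ 0) (t : ℝ) :
    coeff j (logOf (factorialRpowSeries t)) = polyaC j t / j := by
  rw [coeff_logOf_eq_sum_partition (constantCoeff_factorialRpowSeries t), polyaC,
    mul_div_cancel_left₀ _ (Nat.cast_ne_zero.mpr hj)]
  refine Finset.sum_congr rfl fun P _ => ?_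
  have hsub := parts_toFinset_subset_range P
  have hperms : (P.parts.countPerms : ℝ) = P.parts.card.factorial /
      ∏ m ∈ Finset.range (j + 1), ((P.parts.count m).factorial : ℝ) := by
    rw [eq_div_iff (by positivity), mul_comm]
    exact_mod_cast prod_factorial_count_mul_countPerms hsub
  have hprod : (P.parts.map fun m => coeff m (factorialRpowSeries t)).prod =
      ∏ m ∈ Finset.range (j + 1), (m.factorial : ℝ) ^ (-(P.parts.count m : ℝ) * t) := by
    rw [Finset.prod_multiset_map_count]
    refine Finset.prod_subset_one_on_sdiff hsub (fun m hm => ?_) fun m _ => ?_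
    · rw [Multiset.count_eq_zero_of_notMem (by simpa using (Finset.mem_sdiff.mp hm).2)]
      simp
    · rw [factorialRpowSeries, coeff_mk, ← Real.rpow_mul_natCast (by positivity)]
      congr 1
      ring
  rw [coeff_log_real, hperms, hprod, mul_assoc]

lemma polyaC_one (t : ℝ) : polyaC 1 t = 1 := by
  have h := coeff_logOf_factorialRpowSeries one_ne_zero t
  rw [logOf_eq, coeff_subst_eq_sum_range
    (by rw [map_sub, constantCoeff_factorialRpowSeries, map_one, sub_self])] at h
  simpa [Finset.sum_range_succ, factorialRpowSeries, coeff_one] using h.symm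

end Partitions

section Conjugacy

variable {A B D : Type*} {p : A → A} {q : B → B} {r : D → D}

/-- The bijections conjugating the self-map `p` to the self-map `q`. With rooted trees and forests
encoded by parent maps, these are their isomorphisms. -/
abbrev Conjugacy (p : A → A) (q : B → B) : Type _ :=
  {e : A ≃ B // Function.Semiconj e p q}

namespace Conjugacy

/-- The identity as a conjugacy. -/
def refl (p : A → A) : Conjugacy p p :=
  ⟨Equiv.refl A, Function.Semiconj.id_left⟩

/-- The inverse of a conjugacy. -/
def symm (e : Conjugacy p q) : Conjugacy q p :=
  ⟨e.1.symm, e.2.inverse_left e.1.left_inv e.1.right_inv⟩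

/-- The composite of two conjugacies. -/
def trans (e : Conjugacy p q) (e' : Conjugacy q r) : Conjugacy p r :=
  ⟨e.1.trans e'.1, e'.2.comp_left e.2⟩

lemma card_self_eq (e : Conjugacy p q) : Nat.card (Conjugacy p p) = Nat.card (Conjugacy q q) :=
  Nat.card_congr
    { toFun a := (e.symm.trans a).trans e
      invFun b := (e.trans b).trans e.symm
      left_inv a := Subtype.ext <| Equiv.ext fun x => by simp [symm, trans]
      right_inv b := Subtype.ext <| Equiv.ext fun x => by simp [symm, trans] }

end Conjugacy

end Conjugacy

section SigmaEquiv

variable {ι κ : Type*} {V : ι → Type*} {W : κ → Type*}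

lemma exists_sigmaCongr_eq {e : (Σ i, V i) ≃ Σ j, W j} {σ : ι ≃ κ}
    (he : ∀ x, (e x).1 = σ x.1) : ∃ a : ∀ i, V i ≃ W (σ i), Equiv.sigmaCongr σ a = e := by
  have hfiber (i : ι) (x : Σ i, V i) : x.1 = i ↔ (e x).1 = σ i := by
    rw [he, σ.apply_eq_iff_eq]
  refine ⟨fun i => (Equiv.sigmaSubtype i).symm.trans <| (e.subtypeEquiv (hfiber i)).trans
    (Equiv.sigmaSubtype (σ i)), Equiv.ext fun x => ?_⟩
  exact congrArg Subtype.val ((Equiv.sigmaSubtype (σ x.1)).symm_apply_apply ⟨e x, he x⟩)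

end SigmaEquiv

/-- A rooted tree on the vertex type `V`, encoded by the map sending every vertex to its parent,
where the root is its own parent. -/
structure ParentTree (V : Type*) where
  parent : V → V
  root : V
  parent_root : parent root = root
  exists_iterate_parent_eq_root : ∀ v, ∃ k, parent^[k] v = root

namespace ParentTree

section Basic

variable {V W : Type*} {T : ParentTree V} {S : ParentTree W}

lemma induction {motive : V → Prop} (hroot : motive T.root)
    (hparent : ∀ v, motive (T.parent v) → motive v) (v : V) : motive v := by
  obtain ⟨k, hk⟩ := T.exists_iterate_parent_eq_root v
  induction k generalizing v with
  | zero => exact (show v = T.root from hk) ▸ hroot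
  | succ k ih => exact hparent v (ih _ hk)

lemma parent_eq_self_iff {v : V} : T.parent v = v ↔ v = T.root := by
  refine ⟨fun hv => ?_, fun hv => hv ▸ T.parent_root⟩
  obtain ⟨k, hk⟩ := T.exists_iterate_parent_eq_root v
  exact (Function.iterate_fixed hv k).symm.trans hk

lemma eq_root_of_parent_parent_eq (v : V) : T.parent (T.parent v) = v → v = T.root := by
  induction v using T.induction with
  | hroot => exact fun _ => rfl
  | hparent v ih =>
    intro hv
    rw [← hv, ih (congrArg T.parent hv), T.parent_root]

/-- The root-preserving isomorphisms of rooted trees; preservation of the root is automatic because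
the root is the only fixed point of the parent map. -/
abbrev Iso (T : ParentTree V) (S : ParentTree W) : Type _ :=
  Conjugacy T.parent S.parent

lemma Iso.map_root (e : Iso T S) : e.1 T.root = S.root := by
  rw [← parent_eq_self_iff, ← e.2 T.root, T.parent_root]

end Basic

section Graft

variable {A B : Type*}

/-- The parent map of the tree obtained from the forest with parent map `p` by joining the roots of
its components, which are the fixed points of `p`, to a new root `none`. -/
noncomputable def graftMap (p : A → A) (x : Option A) : Option A :=
  x.bind fun a => if p a = a then none else some (p a)

lemma exists_iterate_graftMap_eq_none {p : A → A} {a : A} {k : ℕ}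
    (hk : Function.IsFixedPt p (p^[k] a)) : ∃ l, (graftMap p)^[l] (some a) = none := by
  induction k generalizing a with
  | zero => exact ⟨1, if_pos hk⟩
  | succ k ih =>
    by_cases ha : p a = a
    · exact ⟨1, if_pos ha⟩
    · obtain ⟨l, hl⟩ := ih hk
      refine ⟨l + 1, ?_⟩
      rwa [Function.iterate_succ_apply, show graftMap p (some a) = some (p a) from if_neg ha]

/-- The tree obtained from the forest with parent map `p` by joining the roots of its components to
a new root. -/
noncomputable def graft (p : A → A) (hp : ∀ a, ∃ k, Function.IsFixedPt p (p^[k] a)) :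
    ParentTree (Option A) where
  parent := graftMap p
  root := none
  parent_root := rfl
  exists_iterate_parent_eq_root
    | none => ⟨0, rfl⟩
    | some a => (hp a).elim fun _ hk => exists_iterate_graftMap_eq_none hk

lemma semiconj_graftMap_iff {p : A → A} {q : B → B} (e : A ≃ B) :
    Function.Semiconj (Equiv.optionCongr e) (graftMap p) (graftMap q) ↔
      Function.Semiconj e p q := by
  refine ⟨fun he a => ?_, fun he x => ?_⟩
  · have ha := he (some a)
    by_cases hpa : p a = a <;> by_cases hqa : q (e a) = e a <;> simp_all [graftMap]
  · rcases x with _ | a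
    · rfl
    · have hfixed : q (e a) = e a ↔ p a = a := by rw [← he a, e.apply_eq_iff_eq]
      by_cases hpa : p a = a <;> simp [graftMap, hfixed, hpa, he a]

lemma optionCongr_removeNone {e : Option A ≃ Option B} (he : e none = none) :
    Equiv.optionCongr e.removeNone = e := by
  ext1 x
  rcases x with _ | a
  · exact he.symm
  · refine e.removeNone_some (Option.ne_none_iff_exists'.mp fun ha => ?_)
    exact Option.some_ne_none a (e.injective (ha.trans he.symm))

/-- The isomorphisms between grafted forests are the isomorphisms between the forests. -/
noncomputable def graftIsoEquiv {p : A → A} {q : B → B}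
    (hp : ∀ a, ∃ k, Function.IsFixedPt p (p^[k] a))
    (hq : ∀ b, ∃ k, Function.IsFixedPt q (q^[k] b)) :
    Iso (graft p hp) (graft q hq) ≃ Conjugacy p q where
  toFun e := ⟨e.1.removeNone, (semiconj_graftMap_iff _).mp <| by
    rw [optionCongr_removeNone e.map_root]
    exact e.2⟩
  invFun e := ⟨Equiv.optionCongr e.1, (semiconj_graftMap_iff _).mpr e.2⟩
  left_inv e := Subtype.ext (optionCongr_removeNone e.map_root)
  right_inv e := Subtype.ext e.1.removeNone_optionCongr

end Graft

section Join

variable {ι κ : Type*} {V : ι → Type*} {W : κ → Type*}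

/-- The parent map of the disjoint union of the trees `f i`. -/
def forestParent (f : ∀ i, ParentTree (V i)) : (Σ i, V i) → Σ i, V i :=
  Sigma.map id fun i => (f i).parent

lemma exists_isFixedPt_iterate_forestParent (f : ∀ i, ParentTree (V i)) (x : Σ i, V i) :
    ∃ k, Function.IsFixedPt (forestParent f) ((forestParent f)^[k] x) := by
  rcases x with ⟨i, v⟩
  induction v using (f i).induction with
  | hroot => exact ⟨0, congrArg (Sigma.mk i) (f i).parent_root⟩
  | hparent v ih => exact ih.elim fun k hk => ⟨k + 1, hk⟩

/-- The tree whose branches at the root are the trees `f i`. -/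
noncomputable def join (f : ∀ i, ParentTree (V i)) : ParentTree (Option (Σ i, V i)) :=
  graft (forestParent f) (exists_isFixedPt_iterate_forestParent f)

variable {f : ∀ i, ParentTree (V i)} {g : ∀ j, ParentTree (W j)}

/-- The forest isomorphism assembled from a bijection of the index sets and isomorphisms of the
corresponding trees. -/
def forestIso (a : Σ σ : ι ≃ κ, ∀ i, Iso (f i) (g (σ i))) :
    Conjugacy (forestParent f) (forestParent g) :=
  ⟨Equiv.sigmaCongr a.1 fun i => (a.2 i).1, fun x => Sigma.ext rfl (heq_of_eq ((a.2 x.1).2 x.2))⟩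

lemma forestIso_injective : Function.Injective (forestIso (f := f) (g := g)) := by
  rintro ⟨σ, a⟩ ⟨τ, b⟩ hab
  have happly (i : ι) (v : V i) : (⟨σ i, (a i).1 v⟩ : Σ j, W j) = ⟨τ i, (b i).1 v⟩ :=
    DFunLike.congr_fun (congrArg Subtype.val hab) ⟨i, v⟩
  obtain rfl : σ = τ := Equiv.ext fun i => congrArg Sigma.fst (happly i (f i).root)
  refine congrArg (Sigma.mk σ) (funext fun i => Subtype.ext (Equiv.ext fun v => ?_))
  exact eq_of_heq (Sigma.ext_iff.mp (happly i v)).2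

lemma fst_conjugacy_apply (e : Conjugacy (forestParent f) (forestParent g)) (i : ι) (v : V i) :
    (e.1 ⟨i, v⟩).1 = (e.1 ⟨i, (f i).root⟩).1 := by
  induction v using (f i).induction with
  | hroot => rfl
  | hparent v ih => exact (congrArg Sigma.fst (e.2 ⟨i, v⟩)).symm.trans ih

/-- The bijection between the components of two isomorphic forests. -/
def componentEquiv (e : Conjugacy (forestParent f) (forestParent g)) : ι ≃ κ where
  toFun i := (e.1 ⟨i, (f i).root⟩).1
  invFun j := (e.1.symm ⟨j, (g j).root⟩).1
  left_inv i := (fst_conjugacy_apply e.symm _ (e.1 ⟨i, (f i).root⟩).2).symm.trans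
    (congrArg Sigma.fst (e.1.symm_apply_apply _))
  right_inv j := (fst_conjugacy_apply e _ (e.1.symm ⟨j, (g j).root⟩).2).symm.trans
    (congrArg Sigma.fst (e.1.apply_symm_apply _))

lemma forestIso_surjective : Function.Surjective (forestIso (f := f) (g := g)) := by
  intro e
  obtain ⟨a, ha⟩ := exists_sigmaCongr_eq (e := e.1) (σ := componentEquiv e)
    fun x => fst_conjugacy_apply e x.1 x.2
  refine ⟨⟨componentEquiv e, fun i => ⟨a i, fun v => ?_⟩⟩, Subtype.ext ha⟩
  have hv := e.2 ⟨i, v⟩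
  rw [← ha] at hv
  exact eq_of_heq (Sigma.ext_iff.mp hv).2

/-- An isomorphism of joins permutes the branches and maps them isomorphically. -/
noncomputable def isoJoinEquiv :
    Iso (join f) (join g) ≃ Σ σ : ι ≃ κ, ∀ i, Iso (f i) (g (σ i)) :=
  (graftIsoEquiv _ _).trans
    (Equiv.ofBijective forestIso ⟨forestIso_injective, forestIso_surjective⟩).symm

end Join

section Components

variable {A : Type*} {p : A → A}

lemma iterate_eq_iterate_of_isFixedPt {a : A} {k l : ℕ} (hk : Function.IsFixedPt p (p^[k] a))
    (hl : Function.IsFixedPt p (p^[l] a)) : p^[k] a = p^[l] a :=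
  calc p^[k] a = p^[l] (p^[k] a) := (hk.iterate l).symm
    _ = p^[k] (p^[l] a) := by
      rw [← Function.iterate_add_apply, add_comm, Function.iterate_add_apply]
    _ = p^[l] a := hl.iterate k

variable (hp : ∀ a, ∃ k, Function.IsFixedPt p (p^[k] a))

/-- The root of the component of `a` in the forest with parent map `p`. -/
noncomputable def componentRoot (a : A) : A :=
  p^[(hp a).choose] a

lemma componentRoot_eq_iterate {a : A} {k : ℕ} (hk : Function.IsFixedPt p (p^[k] a)) :
    componentRoot hp a = p^[k] a :=
  iterate_eq_iterate_of_isFixedPt (hp a).choose_spec hk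

lemma componentRoot_apply (a : A) : componentRoot hp (p a) = componentRoot hp a := by
  obtain ⟨k, hk⟩ := hp (p a)
  rw [componentRoot_eq_iterate hp hk, componentRoot_eq_iterate hp (k := k + 1) hk,
    Function.iterate_succ_apply]

/-- The component with root `c` of the forest with parent map `p`. -/
noncomputable def component (c : {c // Function.IsFixedPt p c}) :
    ParentTree {a // componentRoot hp a = c} where
  parent a := ⟨p a, (componentRoot_apply hp a).trans a.2⟩
  root := ⟨c, componentRoot_eq_iterate hp (k := 0) c.2⟩
  parent_root := Subtype.ext c.2
  exists_iterate_parent_eq_root a := by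
    refine ⟨(hp a).choose, Subtype.ext (Eq.trans ?_ a.2)⟩
    exact Function.Semiconj.iterate_right (f := Subtype.val) (fun _ => rfl) _ a

/-- A forest is the disjoint union of its components. -/
noncomputable def conjugacyComponents : Conjugacy (forestParent (component hp)) p :=
  ⟨Equiv.sigmaSubtypeFiberEquiv (componentRoot hp) (Function.IsFixedPt p)
    fun a => (hp a).choose_spec, fun _ => rfl⟩

end Components

section Branches

variable {V : Type*} (T : ParentTree V)

/-- The parent map of the forest obtained from `T` by deleting the root. -/
noncomputable def prune (v : {v // v ≠ T.root}) : {v // v ≠ T.root} :=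
  if hv : T.parent v = T.root then v else ⟨T.parent v, hv⟩

lemma exists_isFixedPt_iterate_prune (v : {v // v ≠ T.root}) :
    ∃ k, Function.IsFixedPt T.prune (T.prune^[k] v) := by
  rcases v with ⟨v, hv⟩
  induction v using T.induction with
  | hroot => exact absurd rfl hv
  | hparent v ih =>
    by_cases hpv : T.parent v = T.root
    · exact ⟨0, dif_pos hpv⟩
    · obtain ⟨k, hk⟩ := ih hpv
      refine ⟨k + 1, ?_⟩
      rwa [Function.iterate_succ_apply,
        show T.prune ⟨v, hv⟩ = ⟨T.parent v, hpv⟩ from dif_neg hpv]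

lemma semiconj_optionSubtypeNe :
    Function.Semiconj (Equiv.optionSubtypeNe T.root) (graftMap T.prune) T.parent := by
  rintro (_ | ⟨v, hv⟩)
  · exact T.parent_root.symm
  · by_cases hpv : T.parent v = T.root
    · simp [graftMap, prune, hpv]
    · have hne : T.parent v ≠ v := fun h => hv (parent_eq_self_iff.mp h)
      simp [graftMap, prune, hpv, hne]

/-- The branches of `T` at the root, indexed by the children of the root. -/
noncomputable def branch (c : {c // Function.IsFixedPt T.prune c}) : ParentTree
    {v // componentRoot T.exists_isFixedPt_iterate_prune v = c} :=
  component T.exists_isFixedPt_iterate_prune c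

/-- A tree is the join of its branches. -/
noncomputable def isoJoinBranch : Iso (join T.branch) T :=
  ((graftIsoEquiv _ T.exists_isFixedPt_iterate_prune).symm (conjugacyComponents _)).trans
    ⟨Equiv.optionSubtypeNe T.root, T.semiconj_optionSubtypeNe⟩

end Branches

section MultiJoin

variable {σ : Type*} {V : σ → Type*}

/-- The tree whose branches at the root are `m s` copies of `R s`, for every `s`. -/
noncomputable def multiJoin (R : ∀ s, ParentTree (V s)) (m : σ → ℕ) :
    ParentTree (Option (Σ x : Σ s, Fin (m s), V x.1)) :=
  join fun x => R x.1

lemma card_vertices_multiJoin [Fintype σ] [∀ s, Finite (V s)] (m : σ → ℕ) :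
    Nat.card (Option (Σ x : Σ s, Fin (m s), V x.1)) = ∑ s, m s * Nat.card (V s) + 1 := by
  simp only [Finite.card_option, Nat.card_sigma, Fintype.sum_sigma, Finset.sum_const,
    Finset.card_univ, Fintype.card_fin, smul_eq_mul]

lemma exists_iso_join_multiJoin (R : ∀ s, ParentTree (V s)) {ι : Type*} [Finite ι]
    {W : ι → Type*} (f : ∀ i, ParentTree (W i)) {s : ι → σ} (a : ∀ i, Iso (f i) (R (s i))) :
    ∃ m, Nonempty (Iso (join f) (multiJoin R m)) := by
  let copies (x : σ) : {i // s i = x} ≃ Fin (Nat.card {i // s i = x}) := Finite.equivFin _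
  let reindex := (Equiv.sigmaFiberEquiv s).symm.trans (Equiv.sigmaCongrRight copies)
  exact ⟨_, ⟨isoJoinEquiv.symm ⟨reindex, a⟩⟩⟩

variable {R : ∀ s, ParentTree (V s)}

lemma multiplicity_eq_of_iso_multiJoin (hR : Pairwise fun s s' => IsEmpty (Iso (R s) (R s')))
    {m m' : σ → ℕ} (e : Iso (multiJoin R m) (multiJoin R m')) : m = m' := by
  obtain ⟨τ, a⟩ := isoJoinEquiv e
  have hτ (x : Σ s, Fin (m s)) : (τ x).1 = x.1 :=
    (hR.eq (not_isEmpty_iff.mpr ⟨a x⟩)).symm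
  obtain ⟨b, -⟩ := exists_sigmaCongr_eq (σ := Equiv.refl σ) hτ
  exact funext fun s => Fin.equiv_iff_eq.mp ⟨b s⟩

variable [Fintype σ]

lemma card_perm_comp_fst_eq (m : σ → ℕ) :
    Fintype.card {τ : Equiv.Perm (Σ s, Fin (m s)) // Sigma.fst ∘ τ = Sigma.fst} =
      ∏ s, (m s).factorial := by
  rw [DomMulAct.stabilizer_card]
  refine Finset.prod_congr rfl fun s _ => congrArg Nat.factorial ?_
  rw [Fintype.card_congr (Equiv.sigmaSubtype s), Fintype.card_fin]

lemma card_iso_multiJoin [∀ s, Finite (V s)]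
    (hR : Pairwise fun s s' => IsEmpty (Iso (R s) (R s'))) (m : σ → ℕ) :
    Nat.card (Iso (multiJoin R m) (multiJoin R m)) =
      ∏ s, (m s).factorial * Nat.card (Iso (R s) (R s)) ^ m s := by
  have hcard (τ : Equiv.Perm (Σ s, Fin (m s))) :
      ∏ x, Nat.card (Iso (R x.1) (R (τ x).1)) = if Sigma.fst ∘ τ = Sigma.fst then
        ∏ x : Σ s, Fin (m s), Nat.card (Iso (R x.1) (R x.1)) else 0 := by
    split_ifs with hτ
    · refine Finset.prod_congr rfl fun x _ => ?_
      rw [show (τ x).1 = x.1 from congrFun hτ x]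
    · obtain ⟨x, hx⟩ := Function.ne_iff.mp hτ
      have : IsEmpty (Iso (R x.1) (R (τ x).1)) := hR (Ne.symm hx)
      exact Finset.prod_eq_zero (Finset.mem_univ x) Nat.card_of_isEmpty
  rw [multiJoin, Nat.card_congr isoJoinEquiv, Nat.card_sigma]
  simp only [Nat.card_pi, hcard]
  rw [← Finset.sum_filter, Finset.sum_const, ← Fintype.card_subtype, card_perm_comp_fst_eq,
    smul_eq_mul, Finset.prod_mul_distrib, Fintype.prod_sigma]
  simp only [Finset.prod_const, Finset.card_univ, Fintype.card_fin]

end MultiJoin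

section Graph

variable {V W : Type*} (T : ParentTree V) {S : ParentTree W}

/-- The underlying graph of a rooted tree, joining every vertex other than the root to its
parent. -/
def graph : SimpleGraph V :=
  SimpleGraph.fromRel fun u v => T.parent u = v

lemma graph_connected : T.graph.Connected := by
  refine (SimpleGraph.connected_iff_exists_forall_reachable _).mpr ⟨T.root, fun v => ?_⟩
  induction v using T.induction with
  | hroot => rfl
  | hparent v ih =>
    by_cases hv : T.parent v = v
    · exact hv ▸ ih
    · exact ih.trans (SimpleGraph.Adj.reachable ⟨hv, Or.inr rfl⟩)

lemma graph_isTree [Finite V] : T.graph.IsTree := by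
  have hconn := T.graph_connected
  let edge (v : {v // v ≠ T.root}) : T.graph.edgeSet :=
    ⟨s(v.1, T.parent v), fun h => v.2 (parent_eq_self_iff.mp h.symm), Or.inl rfl⟩
  have ne_root {u v : V} (hne : u ≠ v) (huv : T.parent u = v) : u ≠ T.root := by
    rintro rfl
    exact hne (T.parent_root.symm.trans huv)
  have hedge : Function.Surjective edge := by
    rintro ⟨⟨u, v⟩, hne, huv | hvu⟩
    · exact ⟨⟨u, ne_root hne huv⟩, Subtype.ext (congrArg (s(u, ·)) huv)⟩
    · exact ⟨⟨v, ne_root hne.symm hvu⟩, Subtype.ext ((congrArg (s(v, ·)) hvu).trans Sym2.eq_swap)⟩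
  have hle : Nat.card T.graph.edgeSet ≤ Nat.card {v // v ≠ T.root} :=
    Nat.card_le_card_of_surjective edge hedge
  have hcard : Nat.card {v // v ≠ T.root} + 1 = Nat.card V := by
    rw [← Finite.card_option, Nat.card_congr (Equiv.optionSubtypeNe T.root)]
  exact SimpleGraph.isTree_iff_connected_and_card.mpr
    ⟨hconn, le_antisymm (by omega) hconn.card_vert_le_card_edgeSet_add_one⟩

variable {T}

lemma Iso.graph_adj_iff (e : Iso T S) {u v : V} :
    S.graph.Adj (e.1 u) (e.1 v) ↔ T.graph.Adj u v := by
  simp only [graph, SimpleGraph.fromRel_adj, ← e.2 _, e.1.apply_eq_iff_eq, ne_eq]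

lemma semiconj_parent_of_graphIso (φ : T.graph ≃g S.graph) (hφ : φ T.root = S.root) :
    Function.Semiconj φ T.parent S.parent := by
  intro v
  induction v using T.induction with
  | hroot => rw [T.parent_root, hφ, S.parent_root]
  | hparent v ih =>
    by_cases hv : v = T.root
    · rw [hv, T.parent_root, hφ, S.parent_root]
    have hadj : T.graph.Adj v (T.parent v) :=
      ⟨fun h => hv (parent_eq_self_iff.mp h.symm), Or.inl rfl⟩
    obtain ⟨-, hup | hdown⟩ := φ.map_adj_iff.mpr hadj
    · exact hup.symm
    · exact absurd (eq_root_of_parent_parent_eq v (φ.injective (ih.trans hdown))) hv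

/-- The isomorphisms of rooted trees are the root-preserving isomorphisms of their graphs. -/
def isoEquivGraphIso {G : SimpleGraph V} {H : SimpleGraph W} (hT : T.graph = G)
    (hS : S.graph = H) : Iso T S ≃ {φ : G ≃g H // φ T.root = S.root} where
  toFun e := ⟨⟨e.1, by subst hT hS; exact e.graph_adj_iff⟩, e.map_root⟩
  invFun φ := ⟨φ.1.toEquiv, by subst hT hS; exact semiconj_parent_of_graphIso φ.1 φ.2⟩
  left_inv _ := rfl
  right_inv _ := rfl

end Graph

section OfConnected

variable {V : Type*} {G : SimpleGraph V}

lemma exists_adj_dist_lt (hG : G.Connected) {r v : V} (hv : v ≠ r) :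
    ∃ u, G.Adj v u ∧ G.dist u r < G.dist v r := by
  obtain ⟨w, hw⟩ := hG.exists_walk_length_eq_dist v r
  have hnil : ¬w.Nil := SimpleGraph.Walk.not_nil_of_ne hv
  refine ⟨w.snd, w.adj_snd hnil, ?_⟩
  rw [← hw, ← SimpleGraph.Walk.length_tail_add_one hnil, Nat.lt_succ_iff]
  exact SimpleGraph.dist_le w.tail

/-- A choice, for every vertex `v ≠ r`, of a neighbour of `v` that is closer to `r`. -/
noncomputable def stepToward (hG : G.Connected) (r v : V) : V :=
  if hv : v = r then r else (exists_adj_dist_lt hG hv).choose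

lemma stepToward_spec (hG : G.Connected) {r v : V} (hv : v ≠ r) :
    G.Adj v (stepToward hG r v) ∧ G.dist (stepToward hG r v) r < G.dist v r := by
  rw [stepToward, dif_neg hv]
  exact (exists_adj_dist_lt hG hv).choose_spec

/-- A spanning tree with root `r` of a connected graph, along which the distance to `r` decreases
towards the root. -/
noncomputable def ofConnected (hG : G.Connected) (r : V) : ParentTree V where
  parent := stepToward hG r
  root := r
  parent_root := dif_pos rfl
  exists_iterate_parent_eq_root v := by
    induction hd : G.dist v r using Nat.strong_induction_on generalizing v with
    | _ d ih =>
      by_cases hv : v = r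
      · exact ⟨0, hv⟩
      · obtain ⟨k, hk⟩ := ih _ (hd ▸ (stepToward_spec hG hv).2) _ rfl
        exact ⟨k + 1, hk⟩

lemma graph_ofConnected_le (hG : G.Connected) (r : V) : (ofConnected hG r).graph ≤ G := by
  have hadj {v : V} (hv : v ≠ stepToward hG r v) : G.Adj v (stepToward hG r v) := by
    refine (stepToward_spec hG fun hvr => hv ?_).1
    rw [stepToward, dif_pos hvr, hvr]
  rintro u v ⟨hne, rfl | rfl⟩
  · exact hadj hne
  · exact (hadj hne.symm).symm

lemma graph_ofConnected_of_isTree (hG : G.IsTree) (r : V) :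
    (ofConnected hG.connected r).graph = G :=
  (SimpleGraph.isTree_iff_minimal_connected.mp hG).eq_of_le (graph_connected _)
    (graph_ofConnected_le _ r)

end OfConnected

end ParentTree

namespace RTree

variable {n : ℕ} {T S : RTree n}

/-- The parent map encoding of a rooted labeled tree. -/
noncomputable def toParentTree (T : RTree n) : ParentTree (Fin n) :=
  ParentTree.ofConnected T.isTree.connected T.root

lemma graph_toParentTree (T : RTree n) : T.toParentTree.graph = T.graph :=
  ParentTree.graph_ofConnected_of_isTree T.isTree T.root

lemma isom_iff_nonempty_iso :
    T.Isom S ↔ Nonempty (ParentTree.Iso T.toParentTree S.toParentTree) :=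
  nonempty_subtype.symm.trans
    (ParentTree.isoEquivGraphIso T.graph_toParentTree S.graph_toParentTree).nonempty_congr.symm

lemma autCard_eq_card_iso (T : RTree n) :
    T.autCard = Nat.card (ParentTree.Iso T.toParentTree T.toParentTree) :=
  (Nat.card_congr
    (ParentTree.isoEquivGraphIso T.graph_toParentTree T.graph_toParentTree)).symm

lemma equivalence_isom (n : ℕ) : Equivalence (fun T S : RTree n => T.Isom S) where
  refl _ := isom_iff_nonempty_iso.mpr ⟨Conjugacy.refl _⟩
  symm h := isom_iff_nonempty_iso.mpr ((isom_iff_nonempty_iso.mp h).map Conjugacy.symm)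
  trans h h' := isom_iff_nonempty_iso.mpr
    (Nonempty.map2 Conjugacy.trans (isom_iff_nonempty_iso.mp h) (isom_iff_nonempty_iso.mp h'))

lemma exists_iso_toParentTree {V : Type*} [Finite V] (T : ParentTree V) (hn : Nat.card V = n) :
    ∃ S : RTree n, Nonempty (ParentTree.Iso T S.toParentTree) := by
  let e : V ≃ Fin n := Finite.equivFinOfCardEq hn
  let φ := SimpleGraph.Iso.map e T.graph
  let S : RTree n := ⟨_, φ.isTree_iff.mp T.graph_isTree, e T.root⟩
  exact ⟨S, ⟨(ParentTree.isoEquivGraphIso rfl S.graph_toParentTree).symm ⟨φ, rfl⟩⟩⟩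

end RTree

namespace Polya

open ParentTree (Iso multiJoin)

variable {n : ℕ}

/-- A parent map encoding of a chosen tree in the isomorphism class `q`. -/
noncomputable def rep (q : Polya n) : ParentTree (Fin n) :=
  (Quot.out q).toParentTree

/-- The order of the automorphism group of the trees in the isomorphism class `q`. -/
noncomputable def autCard (q : Polya n) : ℕ :=
  (Quot.out q).autCard

lemma autCard_eq_card_iso (q : Polya n) : q.autCard = Nat.card (Iso q.rep q.rep) :=
  (Quot.out q).autCard_eq_card_iso

lemma eq_of_iso_rep {q q' : Polya n} (e : Iso q.rep q'.rep) : q = q' := by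
  rw [← Quot.out_eq q, ← Quot.out_eq q']
  exact Quot.sound (RTree.isom_iff_nonempty_iso.mpr ⟨e⟩)

lemma exists_iso_rep {V : Type*} [Finite V] (T : ParentTree V) (hn : Nat.card V = n) :
    ∃ q : Polya n, Nonempty (Iso T q.rep) := by
  obtain ⟨S, ⟨e⟩⟩ := RTree.exists_iso_toParentTree T hn
  have hS : S.Isom (Quot.out (Quot.mk _ S : Polya n)) :=
    ((RTree.equivalence_isom n).quot_mk_eq_iff _ _).mp (Quot.out_eq _).symm
  exact ⟨Quot.mk _ S, (RTree.isom_iff_nonempty_iso.mp hS).map e.trans⟩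

/-- The isomorphism classes of rooted trees with between `1` and `N` vertices, a class of trees with
`k + 1` vertices being indexed by `k`. -/
abbrev Small (N : ℕ) : Type :=
  Σ k : Fin N, Polya (k + 1)

lemma pairwise_isEmpty_iso_rep (N : ℕ) :
    Pairwise fun s s' : Small N => IsEmpty (Iso s.2.rep s'.2.rep) := by
  rintro ⟨k, q⟩ ⟨k', q'⟩ hne
  refine ⟨fun e => hne ?_⟩
  obtain rfl : k = k' := Fin.ext (Nat.succ_injective (Fin.equiv_iff_eq.mp ⟨e.1⟩))
  exact Sigma.ext rfl (heq_of_eq (eq_of_iso_rep e))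

lemma exists_iso_small {N : ℕ} {V : Type*} [Finite V] (T : ParentTree V) (hN : Nat.card V ≤ N) :
    ∃ s : Small N, Nonempty (Iso T s.2.rep) := by
  have : Nonempty V := ⟨T.root⟩
  obtain ⟨k, hk⟩ := Nat.exists_eq_succ_of_ne_zero (Nat.card_pos (α := V)).ne'
  obtain ⟨q, hq⟩ := exists_iso_rep T hk
  exact ⟨⟨⟨k, by lia⟩, q⟩, hq⟩

lemma exists_iso_multiJoin {V : Type*} [Finite V] (T : ParentTree V)
    (hn : Nat.card V = n + 1) :
    ∃ m, Nonempty (Iso T (multiJoin (fun s : Small n => s.2.rep) m)) := by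
  have hpruned : Nat.card {v // v ≠ T.root} = n := by
    have := Finite.card_option (α := {v // v ≠ T.root})
    rw [Nat.card_congr (Equiv.optionSubtypeNe T.root), hn] at this
    exact Nat.succ_injective this.symm
  choose s hs using fun c =>
    exists_iso_small (T.branch c) ((Finite.card_subtype_le _).trans hpruned.le)
  obtain ⟨m, ⟨e⟩⟩ := ParentTree.exists_iso_join_multiJoin (fun s : Small n => s.2.rep) T.branch
    fun c => (hs c).some
  exact ⟨m, ⟨T.isoJoinBranch.symm.trans e⟩⟩

lemma card_vertices_multiJoin_rep (m : Small n → ℕ) :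
    Nat.card (Option (Σ x : Σ s, Fin (m s), Fin (x.1.1 + 1))) = ∑ s, m s * (s.1 + 1) + 1 := by
  simpa only [Nat.card_fin] using
    ParentTree.card_vertices_multiJoin (V := fun s : Small n => Fin (s.1 + 1)) m

/-- The number of branches at the root that belong to each isomorphism class, for the trees in the
isomorphism class `q`. -/
noncomputable def branchMult (q : Polya (n + 1)) : Small n → ℕ :=
  (exists_iso_multiJoin q.rep (Nat.card_fin _)).choose

/-- The trees in `q` are the join of their branches. -/
noncomputable def isoBranchMult (q : Polya (n + 1)) :
    Iso q.rep (multiJoin (fun s : Small n => s.2.rep) q.branchMult) :=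
  (exists_iso_multiJoin q.rep (Nat.card_fin _)).choose_spec.some

lemma sum_branchMult (q : Polya (n + 1)) :
    ∑ s : Small n, q.branchMult s * (s.1 + 1) = n := by
  have hcard := Nat.card_congr q.isoBranchMult.1
  rw [card_vertices_multiJoin_rep, Nat.card_fin] at hcard
  exact Nat.succ_injective hcard.symm

lemma branchMult_injective : Function.Injective (branchMult (n := n)) := fun q q' h =>
  eq_of_iso_rep (q.isoBranchMult.trans (h ▸ q'.isoBranchMult.symm))

lemma exists_branchMult_eq {m : Small n → ℕ} (hm : ∑ s, m s * (s.1 + 1) = n) :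
    ∃ q : Polya (n + 1), q.branchMult = m := by
  obtain ⟨q, ⟨e⟩⟩ := exists_iso_rep (multiJoin (fun s : Small n => s.2.rep) m)
    ((card_vertices_multiJoin_rep m).trans (congrArg Nat.succ hm))
  exact ⟨q, (ParentTree.multiplicity_eq_of_iso_multiJoin (pairwise_isEmpty_iso_rep n)
    (e.trans q.isoBranchMult)).symm⟩

lemma autCard_eq_prod (q : Polya (n + 1)) :
    q.autCard = ∏ s : Small n, (q.branchMult s).factorial * s.2.autCard ^ q.branchMult s := by
  simp only [autCard_eq_card_iso]
  rw [q.isoBranchMult.card_self_eq,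
    ParentTree.card_iso_multiJoin (pairwise_isEmpty_iso_rep n)]

end Polya

section FunctionalEquation

open PowerSeries

lemma pcomp_eq_subst {G : ℝ⟦X⟧} (hG : constantCoeff G = 0) (Y : ℝ⟦X⟧) :
    pcomp Y G = Y.subst G := by
  ext n
  rw [pcomp, coeff_mk, coeff_subst_eq_sum_range hG]

lemma pexp_eq_exp_subst {G : ℝ⟦X⟧} (hG : constantCoeff G = 0) : pexp G = (exp ℝ).subst G := by
  ext n
  rw [pexp, coeff_mk, coeff_subst_eq_sum_range hG]
  simp [coeff_exp, div_eq_inv_mul]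

/-- The generating series `F_t` of the isomorphism classes of rooted trees by number of vertices,
every class being weighted by the power `-t` of the order of its automorphism group. -/
noncomputable def polyaSeries (t : ℝ) : ℝ⟦X⟧ :=
  PowerSeries.mk fun n => ∑ q : Polya n, (q.autCard : ℝ) ^ (-t)

lemma coeff_polyaSeries (t : ℝ) (n : ℕ) :
    coeff n (polyaSeries t) = ∑ q : Polya n, (q.autCard : ℝ) ^ (-t) :=
  coeff_mk n _

lemma constantCoeff_polyaSeries (t : ℝ) : constantCoeff (polyaSeries t) = 0 := by
  have : IsEmpty (Polya 0) := ⟨fun q => (Quot.out q).root.elim0⟩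
  rw [← coeff_zero_eq_constantCoeff_apply, coeff_polyaSeries, Fintype.sum_empty]

lemma eq_polyaSeries {A : ∀ n : ℕ, Polya n → ℕ}
    (hA : ∀ (n : ℕ) (T : RTree n), A n (Quot.mk _ T) = T.autCard) {F : ℝ → ℝ⟦X⟧}
    (hF : ∀ (t : ℝ) (n : ℕ),
      coeff n (F t) = if n = 0 then 0 else ∑ q : Polya n, (A n q : ℝ) ^ (-t)) :
    F = polyaSeries := by
  have hA' (n : ℕ) (q : Polya n) : A n q = q.autCard := by
    exact (congrArg (A n) (Quot.out_eq q)).symm.trans (hA n _)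
  ext t n
  rcases n with _ | n
  · simp [hF, constantCoeff_polyaSeries]
  · simp [hF, hA', coeff_polyaSeries]

lemma autCard_rpow_eq_prod {n : ℕ} (t : ℝ) (q : Polya (n + 1)) :
    (q.autCard : ℝ) ^ (-t) = ∏ s : Polya.Small n,
      coeff (q.branchMult s) (factorialRpowSeries t) *
        ((s.2.autCard : ℝ) ^ (-t)) ^ q.branchMult s := by
  rw [q.autCard_eq_prod, Nat.cast_prod, ← Real.finsetProd_rpow _ _ fun _ _ => Nat.cast_nonneg _]
  refine Finset.prod_congr rfl fun s _ => ?_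
  rw [factorialRpowSeries, coeff_mk, Nat.cast_mul, Nat.cast_pow,
    Real.mul_rpow (Nat.cast_nonneg _) (by positivity), Real.rpow_pow_comm (Nat.cast_nonneg _)]

/-- The contribution `|Aut S|^{-t} X^{|S|}` of the isomorphism class `s` of a tree `S` to `F_t`. -/
noncomputable def classMonomial {n : ℕ} (t : ℝ) (s : Polya.Small n) : ℝ⟦X⟧ :=
  C ((s.2.autCard : ℝ) ^ (-t)) * X ^ ((s.1 : ℕ) + 1)

lemma constantCoeff_classMonomial {n : ℕ} (t : ℝ) (s : Polya.Small n) :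
    constantCoeff (classMonomial t s) = 0 :=
  constantCoeff_C_mul_X_pow _ (Nat.succ_ne_zero _)

lemma coeff_succ_polyaSeries_eq_coeff_prod (t : ℝ) (n : ℕ) :
    coeff (n + 1) (polyaSeries t) = coeff n (∏ s : Polya.Small n,
      (factorialRpowSeries t).subst (classMonomial t s)) := by
  have hw (s : Polya.Small n) : (s.1 : ℕ) + 1 ≠ 0 := Nat.succ_ne_zero _
  simp only [classMonomial]
  rw [coeff_polyaSeries, coeff_prod_subst_C_mul_X_pow (fun _ => factorialRpowSeries t) _ hw]
  refine Finset.sum_bij (fun q _ => q.branchMult)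
    (fun q _ => (mem_weightedAntidiag hw).mpr q.sum_branchMult)
    (fun _ _ _ _ h => Polya.branchMult_injective h) (fun m hm => ?_)
    fun q _ => autCard_rpow_eq_prod t q
  obtain ⟨q, hq⟩ := Polya.exists_branchMult_eq ((mem_weightedAntidiag hw).mp hm)
  exact ⟨q, Finset.mem_univ q, hq⟩

lemma sum_Icc_ite_dvd {M : Type*} [AddCommMonoid M] (g : ℕ → M) {k N : ℕ} (hk : k ≠ 0)
    (hkN : k ≤ N) :
    ∑ d ∈ Finset.Icc 1 N, (if d ∣ k then g d else 0) = ∑ d ∈ k.divisors, g d := by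
  rw [← Finset.sum_filter]
  refine Finset.sum_congr (Finset.ext fun d => ?_) fun _ _ => rfl
  rw [Finset.mem_filter, Finset.mem_Icc, Nat.mem_divisors, and_iff_left hk, and_iff_right_iff_imp]
  exact fun hd => ⟨Nat.pos_of_dvd_of_pos hd hk.bot_lt, (Nat.le_of_dvd hk.bot_lt hd).trans hkN⟩

lemma coeff_polyaSum_eq_sum_divisors (F : ℝ → ℝ⟦X⟧) (t : ℝ) {k : ℕ} (hk : k ≠ 0) :
    coeff k (polyaSum F t) =
      ∑ j ∈ k.divisors, polyaC j t / j * coeff (k / j) (F (j * t)) := by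
  rw [polyaSum, coeff_mk, ← sum_Icc_ite_dvd _ hk le_rfl]
  simp only [mul_ite, mul_zero]

lemma constantCoeff_polyaSum (F : ℝ → ℝ⟦X⟧) (t : ℝ) : constantCoeff (polyaSum F t) = 0 := by
  rw [← coeff_zero_eq_constantCoeff_apply, polyaSum, coeff_mk, Finset.Icc_eq_empty (by simp),
    Finset.sum_empty]

lemma sum_small_eq_sum_Icc {M : Type*} [AddCommMonoid M] (N : ℕ) (g : ∀ d, Polya d → M) :
    ∑ s : Polya.Small N, g (s.1 + 1) s.2 = ∑ d ∈ Finset.Icc 1 N, ∑ q : Polya d, g d q := by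
  rw [Fintype.sum_sigma, Fin.sum_univ_eq_sum_range fun k => ∑ q : Polya (k + 1), g (k + 1) q,
    Finset.range_eq_Ico, Finset.sum_Ico_add' fun d => ∑ q : Polya d, g d q]
  rfl

lemma coeff_sum_logOf_subst_classMonomial (t : ℝ) {n k : ℕ} (hk : k ≠ 0) (hkn : k ≤ n) :
    coeff k (∑ s : Polya.Small n, (logOf (factorialRpowSeries t)).subst (classMonomial t s)) =
      coeff k (polyaSum polyaSeries t) := by
  have hrpow (d j : ℕ) (q : Polya d) :
      ((q.autCard : ℝ) ^ (-t)) ^ j = (q.autCard : ℝ) ^ (-(j * t)) := by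
    rw [← Real.rpow_mul_natCast (Nat.cast_nonneg _), mul_comm, mul_neg]
  let term (d j : ℕ) : ℝ := coeff j (logOf (factorialRpowSeries t)) * coeff d (polyaSeries (j * t))
  calc
    _ = ∑ d ∈ Finset.Icc 1 n, if d ∣ k then term d (k / d) else 0 := by
      simp only [map_sum, classMonomial, coeff_subst_C_mul_X_pow _ _ (Nat.succ_ne_zero _), hrpow]
      rw [sum_small_eq_sum_Icc n fun d q => if d ∣ k then
        coeff (k / d) (logOf (factorialRpowSeries t)) *
          (q.autCard : ℝ) ^ (-((k / d : ℕ) * t)) else 0]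
      refine Finset.sum_congr rfl fun d _ => ?_
      split_ifs
      · rw [← Finset.mul_sum, ← coeff_polyaSeries]
      · exact Finset.sum_const_zero
    _ = ∑ d ∈ k.divisors, term d (k / d) := sum_Icc_ite_dvd _ hk hkn
    _ = ∑ j ∈ k.divisors, term (k / j) j := by
      rw [← Nat.sum_div_divisors]
      refine Finset.sum_congr rfl fun j hj => ?_
      rw [Nat.div_div_self (Nat.dvd_of_mem_divisors hj) hk]
    _ = coeff k (polyaSum polyaSeries t) := by
      rw [coeff_polyaSum_eq_sum_divisors _ _ hk]
      refine Finset.sum_congr rfl fun j hj => ?_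
      rw [← coeff_logOf_factorialRpowSeries (Nat.pos_of_mem_divisors hj).ne']

lemma prod_subst_classMonomial_eq_exp_subst (t : ℝ) (n : ℕ) :
    ∏ s : Polya.Small n, (factorialRpowSeries t).subst (classMonomial t s) =
      (exp ℝ).subst (∑ s : Polya.Small n,
        (logOf (factorialRpowSeries t)).subst (classMonomial t s)) := by
  have hφ := constantCoeff_factorialRpowSeries t
  rw [exp_subst_sum _ fun s _ => constantCoeff_logOf_subst hφ (constantCoeff_classMonomial t s)]
  exact Finset.prod_congr rfl fun s _ =>
    (exp_subst_logOf_subst hφ (constantCoeff_classMonomial t s)).symm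

lemma polyaSeries_eq_X_mul_exp_subst (t : ℝ) :
    polyaSeries t = X * (exp ℝ).subst (polyaSum polyaSeries t) := by
  ext (_ | n)
  · simp [constantCoeff_polyaSeries]
  let L : ℝ⟦X⟧ := ∑ s : Polya.Small n,
    (logOf (factorialRpowSeries t)).subst (classMonomial t s)
  have hL₀ : constantCoeff L = 0 := by
    rw [map_sum]
    exact Finset.sum_eq_zero fun s _ => constantCoeff_logOf_subst
      (constantCoeff_factorialRpowSeries t) (constantCoeff_classMonomial t s)
  have hL : X ^ (n + 1) ∣ L - polyaSum polyaSeries t := by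
    refine X_pow_dvd_iff.mpr fun k hk => ?_
    rw [map_sub, sub_eq_zero]
    rcases eq_or_ne k 0 with rfl | hk₀
    · simp only [coeff_zero_eq_constantCoeff_apply, hL₀, constantCoeff_polyaSum]
    · exact coeff_sum_logOf_subst_classMonomial t hk₀ (Nat.lt_succ_iff.mp hk)
  have hexp := X_pow_dvd_iff.mp
    (X_pow_dvd_subst_sub_subst hL₀ (constantCoeff_polyaSum _ t) hL (exp ℝ)) n n.lt_succ_self
  rw [map_sub, sub_eq_zero] at hexp
  rw [coeff_succ_polyaSeries_eq_coeff_prod, prod_subst_classMonomial_eq_exp_subst, hexp,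
    coeff_succ_X_mul]

/-- The terms `j ≥ 2` of `polyaSum F t`. -/
noncomputable def polyaSumTail (F : ℝ → ℝ⟦X⟧) (t : ℝ) : ℝ⟦X⟧ :=
  PowerSeries.mk fun n =>
    ∑ j ∈ Finset.Icc 2 n,
      (polyaC j t / (j : ℝ)) *
        (if j ∣ n then coeff (n / j) (F ((j : ℝ) * t)) else 0)

/-- The series `Ξ` for an arbitrary exponent `t`; `xiSeries` is the case `t = 2`. -/
noncomputable def xiSeriesAt (F : ℝ → ℝ⟦X⟧) (t : ℝ) : ℝ⟦X⟧ :=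
  X * pexp (polyaSumTail F t)

lemma constantCoeff_polyaSumTail (F : ℝ → ℝ⟦X⟧) (t : ℝ) :
    constantCoeff (polyaSumTail F t) = 0 := by
  rw [← coeff_zero_eq_constantCoeff_apply, polyaSumTail, coeff_mk, Finset.Icc_eq_empty (by simp),
    Finset.sum_empty]

lemma constantCoeff_xiSeriesAt (F : ℝ → ℝ⟦X⟧) (t : ℝ) : constantCoeff (xiSeriesAt F t) = 0 := by
  simp [xiSeriesAt]

lemma polyaSum_eq_polyaSumTail_add {F : ℝ → ℝ⟦X⟧} {t : ℝ} (hF : constantCoeff (F t) = 0) :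
    polyaSum F t = polyaSumTail F t + F t := by
  ext n
  rw [map_add, polyaSum, polyaSumTail, coeff_mk, coeff_mk]
  rcases n.eq_zero_or_pos with rfl | hn
  · simp [hF]
  · rw [← Finset.insert_Icc_add_one_left_eq_Icc hn, Finset.sum_insert (by simp), add_comm]
    simp [polyaC_one]

lemma polyaSeries_eq_xiSeriesAt_mul_exp_subst (t : ℝ) :
    polyaSeries t = xiSeriesAt polyaSeries t * (exp ℝ).subst (polyaSeries t) := by
  have htail := constantCoeff_polyaSumTail polyaSeries t
  have hF := constantCoeff_polyaSeries t
  conv_lhs => rw [polyaSeries_eq_X_mul_exp_subst, polyaSum_eq_polyaSumTail_add hF,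
    exp_subst_add htail hF, ← mul_assoc, ← pexp_eq_exp_subst htail]
  rfl

theorem polya_tree_function_composition_general (t : ℝ) {Y : ℝ⟦X⟧} (hY : Y = X * pexp Y) :
    polyaSeries t = pcomp Y (xiSeriesAt polyaSeries t) := by
  have hY₀ : constantCoeff Y = 0 := by rw [hY, map_mul, constantCoeff_X, zero_mul]
  rw [pexp_eq_exp_subst hY₀] at hY
  rw [pcomp_eq_subst (constantCoeff_xiSeriesAt _ t)]
  exact eq_subst_of_eq_mul_subst (constantCoeff_xiSeriesAt _ t) hY
    (polyaSeries_eq_xiSeriesAt_mul_exp_subst t)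

end FunctionalEquation

/-- Let `Y` be the tree function, the unique formal power
series with zero constant term satisfying `Y = X·exp(Y)`, and let `F t` be the
power series whose `n`-th coefficient, for `n ≥ 1`, is `∑ |Aut(T)|^{−t}` over
the isomorphism classes of rooted labeled trees on `n` vertices.  Then
`F 2 = Y ∘ Ξ` where `Ξ = X·exp(∑_{j ≥ 2} (c(j,2)/j)·F_{2j}(X^j))`. -/
theorem polya_tree_function_composition
    (A : ∀ n : ℕ, Polya n → ℕ)
    (hA : ∀ (n : ℕ) (T : RTree n), A n (Quot.mk _ T) = T.autCard)
    (F : ℝ → PowerSeries ℝ)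
    (hF : ∀ (t : ℝ) (n : ℕ),
      PowerSeries.coeff n (F t) =
        if n = 0 then 0 else ∑ q : Polya n, ((A n q : ℝ)) ^ (-t))
    (Y : PowerSeries ℝ)
    (hY0 : PowerSeries.constantCoeff Y = 0)
    (hY : Y = PowerSeries.X * pexp Y) :
    F 2 = pcomp Y (xiSeries F) := by
  rw [eq_polyaSeries hA hF]
  exact polya_tree_function_composition_general 2 hY
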